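/- Let 0 ≤ α < ω₁, let (X_t)_{t∈T} be a family of nonempty topological spaces such that for every at most countable set T₀ ⊆ T the product ∏_{t∈T₀} X_t is α-universal, let X = ∏_{t∈T} X_t, and let E ⊆ X be a set such that for every continuous function f : E → ℝ there exist an at most countable set T₀ ⊆ T and a continuous mapping f₀ : p_{T₀}(E) → ℝ with f = f₀ ∘ (p_{T₀}|_E). Then E is α-embedded in X. -/

import Mathlib

/-!
A set of functional class `α` in `E` is built by countably many operations from zero sets of
continuous functions on `E`. Each such function factors through countably many coordinates, and
countably many countable sets of coordinates can be merged into one, so the whole set is the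
preimage of a set `B` of the same class in `proj S '' E` for a single countable `S`. As
`proj S '' E` is `α`-embedded in its product, `B` is the trace of a set `C` of multiplicative
class `α`, and `proj S ⁻¹' C` cuts out the original set on `E`.
-/

open Set Topology

/-- A topological space is pseudo-ℵ₁-compact if every locally finite family of
(pairwise distinct) nonempty open subsets is at most countable. -/
def PseudoAleph1Compact (Z : Type*) [TopologicalSpace Z] : Prop :=
  ∀ 𝒰 : Set (Set Z), (∀ U ∈ 𝒰, IsOpen U) → (∀ U ∈ 𝒰, U.Nonempty) →
    LocallyFinite (fun U : 𝒰 => (U : Set Z)) → 𝒰.Countable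

/-- `A` is functionally closed in `Z` if it is the zero set of a continuous real function. -/
def FunctionallyClosed {Z : Type*} [TopologicalSpace Z] (A : Set Z) : Prop :=
  ∃ f : Z → ℝ, Continuous f ∧ A = f ⁻¹' {0}

/-- `A` is functionally open in `Z` if its complement is functionally closed. -/
def FunctionallyOpen {Z : Type*} [TopologicalSpace Z] (A : Set Z) : Prop :=
  FunctionallyClosed Aᶜ

/-- `FunClass Z true α A` : `A` is of the functionally additive class `α` in `Z`;
`FunClass Z false α A` : `A` is of the functionally multiplicative class `α` in `Z`. -/
inductive FunClass (Z : Type*) [TopologicalSpace Z] : Bool → Ordinal.{0} → Set Z → Prop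
  | open_ (A : Set Z) (h : FunctionallyOpen A) : FunClass Z true 0 A
  | closed_ (A : Set Z) (h : FunctionallyClosed A) : FunClass Z false 0 A
  | union (α : Ordinal.{0}) (A : ℕ → Set Z) (β : ℕ → Ordinal.{0}) (hα : α ≠ 0)
      (hβ : ∀ n, β n < α) (h : ∀ n, FunClass Z false (β n) (A n)) :
      FunClass Z true α (⋃ n, A n)
  | inter (α : Ordinal.{0}) (A : ℕ → Set Z) (β : ℕ → Ordinal.{0}) (hα : α ≠ 0)
      (hβ : ∀ n, β n < α) (h : ∀ n, FunClass Z true (β n) (A n)) :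
      FunClass Z false α (⋂ n, A n)

/-- `A` is α-embedded in `Z` if every subset of `A` of functionally multiplicative class `α`
in the subspace `A` is the trace on `A` of a set of functionally multiplicative class `α` in `Z`. -/
def IsAlphaEmbedded {Z : Type*} [TopologicalSpace Z] (α : Ordinal.{0}) (A : Set Z) : Prop :=
  ∀ B : Set Z, B ⊆ A → FunClass ↥A false α (Subtype.val ⁻¹' B) →
    ∃ C : Set Z, FunClass Z false α C ∧ C ∩ A = B

/-- `Z` is α-universal if every subset of `Z` is α-embedded in `Z`. -/
def AlphaUniversal (Z : Type*) [TopologicalSpace Z] (α : Ordinal.{0}) : Prop :=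
  ∀ A : Set Z, IsAlphaEmbedded α A

/-- The projection of the product `∀ t, X t` onto the coordinates in `S`. -/
def proj {T : Type*} {X : T → Type*} (S : Set T) (x : ∀ t, X t) : ∀ t : S, X t.1 :=
  fun t => x t.1

/-- A functionally measurable (Baire) set: a member of some functionally additive or
multiplicative class `α` with `α < ω₁`. -/
def FunctionallyMeasurable {Z : Type*} [TopologicalSpace Z] (A : Set Z) : Prop :=
  ∃ (b : Bool) (β : Ordinal.{0}), β < (Cardinal.aleph 1).ord ∧ FunClass Z b β A

/-- `Y` has a regular `Gδ`-diagonal. -/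
def RegularGDeltaDiagonal (Y : Type*) [TopologicalSpace Y] : Prop :=
  ∃ G : ℕ → Set (Y × Y), (∀ n, IsOpen (G n)) ∧
    {p : Y × Y | p.1 = p.2} = ⋂ n, G n ∧
    {p : Y × Y | p.1 = p.2} = ⋂ n, closure (G n)

section Preimage

variable {Y Z : Type*} [TopologicalSpace Y] [TopologicalSpace Z] {g : Y → Z} {A : Set Z}

theorem FunctionallyClosed.preimage (hA : FunctionallyClosed A) (hg : Continuous g) :
    FunctionallyClosed (g ⁻¹' A) := by
  obtain ⟨f, hf, rfl⟩ := hA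
  exact ⟨f ∘ g, hf.comp hg, rfl⟩

theorem FunctionallyOpen.preimage (hA : FunctionallyOpen A) (hg : Continuous g) :
    FunctionallyOpen (g ⁻¹' A) :=
  FunctionallyClosed.preimage hA hg

theorem FunClass.preimage {b : Bool} {α : Ordinal.{0}} (hA : FunClass Z b α A)
    (hg : Continuous g) : FunClass Y b α (g ⁻¹' A) := by
  induction hA with
  | open_ A hA => exact .open_ _ (hA.preimage hg)
  | closed_ A hA => exact .closed_ _ (hA.preimage hg)
  | union α A β hα hβ _ ih =>
    rw [preimage_iUnion]
    exact .union α _ β hα hβ ih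
  | inter α A β hα hβ _ ih =>
    rw [preimage_iInter]
    exact .inter α _ β hα hβ ih

end Preimage

theorem isAlphaEmbedded_iff_forall_exists_preimage_val {Z : Type*} [TopologicalSpace Z]
    {α : Ordinal.{0}} {A : Set Z} :
    IsAlphaEmbedded α A ↔ ∀ B : Set A, FunClass A false α B →
      ∃ C : Set Z, FunClass Z false α C ∧ Subtype.val ⁻¹' C = B := by
  constructor
  · intro hA B hB
    obtain ⟨C, hC, hCB⟩ := hA (Subtype.val '' B) (Subtype.coe_image_subset A B)
      (by rwa [preimage_image_eq B Subtype.val_injective])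
    refine ⟨C, hC, ?_⟩
    rw [← Subtype.preimage_coe_inter_self, hCB, preimage_image_eq B Subtype.val_injective]
  · intro hA B hBA hB
    obtain ⟨C, hC, hCB⟩ := hA _ hB
    refine ⟨C, hC, ?_⟩
    rw [inter_comm, Subtype.preimage_coe_eq_preimage_coe_iff.mp hCB, inter_eq_right.mpr hBA]

/-- A family of maps `q i : W → Y i` is countably directed if any sequence of its members factors
continuously through a single member. This captures the merging of countably many countable sets
of coordinates. -/
def CountablyDirected {ι W : Type*} {Y : ι → Type*} [∀ i, TopologicalSpace (Y i)]
    (q : ∀ i, W → Y i) : Prop :=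
  ∀ i : ℕ → ι, ∃ j, ∀ n, ∃ g : Y j → Y (i n), Continuous g ∧ g ∘ q j = q (i n)

section CountablyDirected

variable {ι W : Type*} {Y : ι → Type*} [∀ i, TopologicalSpace (Y i)] {q : ∀ i, W → Y i}

theorem CountablyDirected.exists_common_preimage (hq : CountablyDirected q) {b : Bool}
    {β : ℕ → Ordinal.{0}} {A : ℕ → Set W}
    (hA : ∀ n, ∃ i, ∃ B : Set (Y i), FunClass (Y i) b (β n) B ∧ q i ⁻¹' B = A n) :
    ∃ j, ∃ B : ℕ → Set (Y j),
      (∀ n, FunClass (Y j) b (β n) (B n)) ∧ ∀ n, q j ⁻¹' B n = A n := by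
  choose i B hB hBA using hA
  obtain ⟨j, hj⟩ := hq i
  choose g hg hgq using hj
  refine ⟨j, fun n => g n ⁻¹' B n, fun n => (hB n).preimage (hg n), fun n => ?_⟩
  rw [← preimage_comp, hgq, hBA]

theorem FunClass.exists_preimage_of_countablyDirected [TopologicalSpace W]
    (hq : CountablyDirected q)
    (hclosed : ∀ A : Set W, FunctionallyClosed A →
      ∃ i, ∃ B : Set (Y i), FunctionallyClosed B ∧ q i ⁻¹' B = A)
    {b : Bool} {α : Ordinal.{0}} {A : Set W} (hA : FunClass W b α A) :
    ∃ i, ∃ B : Set (Y i), FunClass (Y i) b α B ∧ q i ⁻¹' B = A := by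
  induction hA with
  | open_ A hA =>
    obtain ⟨i, B, hB, hBA⟩ := hclosed Aᶜ hA
    refine ⟨i, Bᶜ, .open_ _ ?_, by rw [preimage_compl, hBA, compl_compl]⟩
    rwa [FunctionallyOpen, compl_compl]
  | closed_ A hA =>
    obtain ⟨i, B, hB, hBA⟩ := hclosed A hA
    exact ⟨i, B, .closed_ _ hB, hBA⟩
  | union α A β hα hβ _ ih =>
    obtain ⟨j, B, hB, hBA⟩ := hq.exists_common_preimage ih
    refine ⟨j, ⋃ n, B n, .union α B β hα hβ hB, ?_⟩
    simp only [preimage_iUnion, hBA]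
  | inter α A β hα hβ _ ih =>
    obtain ⟨j, B, hB, hBA⟩ := hq.exists_common_preimage ih
    refine ⟨j, ⋂ n, B n, .inter α B β hα hβ hB, ?_⟩
    simp only [preimage_iInter, hBA]

end CountablyDirected

section Product

variable {T : Type*} {X : T → Type*}

theorem mapsTo_domRestrict₂_image_proj {S S' : Set T} (h : S ⊆ S') (E : Set (∀ t, X t)) :
    MapsTo (domRestrict₂ (π := X) h) (proj S' '' E) (proj S '' E) := by
  rintro _ ⟨x, hx, rfl⟩
  exact ⟨x, hx, rfl⟩

variable [∀ t, TopologicalSpace (X t)]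

theorem continuous_proj (S : Set T) : Continuous (proj S : (∀ t, X t) → ∀ t : S, X t.1) :=
  Pi.continuous_domRestrict S

theorem countablyDirected_imageFactorization_proj (E : Set (∀ t, X t)) :
    CountablyDirected fun S : {S : Set T // S.Countable} => imageFactorization (proj S.1) E := by
  intro S
  refine ⟨⟨⋃ n, (S n).1, countable_iUnion fun n => (S n).2⟩, fun n => ?_⟩
  have hS : (S n).1 ⊆ ⋃ n, (S n).1 := subset_iUnion (fun n => (S n).1) n
  exact ⟨(mapsTo_domRestrict₂_image_proj hS E).restrict,
    (Pi.continuous_domRestrict₂ hS).restrict _, rfl⟩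

theorem statement9_general (α : Ordinal.{0}) (E : Set (∀ t, X t))
    (hemb : ∀ T₀ : Set T, T₀.Countable → IsAlphaEmbedded α (proj T₀ '' E))
    (hfac : ∀ f : ↥E → ℝ, Continuous f →
      ∃ T₀ : Set T, T₀.Countable ∧
        ∃ f₀ : ↥(proj T₀ '' E) → ℝ, Continuous f₀ ∧
          ∀ x : ↥E, f x = f₀ ⟨proj T₀ x.1, ⟨x.1, x.2, rfl⟩⟩) :
    IsAlphaEmbedded α E := by
  have hclosed : ∀ A : Set E, FunctionallyClosed A →
      ∃ S : {S : Set T // S.Countable}, ∃ B : Set (proj S.1 '' E),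
        FunctionallyClosed B ∧ imageFactorization (proj S.1) E ⁻¹' B = A := by
    rintro _ ⟨f, hf, rfl⟩
    obtain ⟨S, hS, f₀, hf₀, hff₀⟩ := hfac f hf
    obtain rfl : f = f₀ ∘ imageFactorization (proj S) E := funext hff₀
    exact ⟨⟨S, hS⟩, f₀ ⁻¹' {0}, ⟨f₀, hf₀, rfl⟩, rfl⟩
  rw [isAlphaEmbedded_iff_forall_exists_preimage_val]
  intro A hA
  obtain ⟨⟨S, hS⟩, B, hB, rfl⟩ := hA.exists_preimage_of_countablyDirected
    (countablyDirected_imageFactorization_proj E) hclosed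
  obtain ⟨C, hC, rfl⟩ :=
    isAlphaEmbedded_iff_forall_exists_preimage_val.mp (hemb S hS) B hB
  exact ⟨proj S ⁻¹' C, hC.preimage (continuous_proj S), rfl⟩

end Product

/-- if every at most countable subproduct of `∏ t, X t` is α-universal and
every continuous real function on `E` factors continuously through a projection onto
countably many coordinates, then `E` is α-embedded in the product. -/
theorem statement9 {T : Type u} {X : T → Type v} [∀ t, TopologicalSpace (X t)]
    [∀ t, Nonempty (X t)]
    (α : Ordinal.{0}) (hα : α < (Cardinal.aleph 1).ord)
    (huniv : ∀ T₀ : Set T, T₀.Countable → AlphaUniversal (∀ t : T₀, X t.1) α)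
    (E : Set (∀ t, X t))
    (hfac : ∀ f : ↥E → ℝ, Continuous f →
      ∃ T₀ : Set T, T₀.Countable ∧
        ∃ f₀ : ↥(proj T₀ '' E) → ℝ, Continuous f₀ ∧
          ∀ x : ↥E, f x = f₀ ⟨proj T₀ x.1, ⟨x.1, x.2, rfl⟩⟩) :
    IsAlphaEmbedded α E := by
  exact statement9_general α E (fun T₀ hT₀ => huniv T₀ hT₀ (proj T₀ '' E)) hfac
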